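/- arXiv:1311.1488 — 2 statements merged into one kernel-verified Lean document; each statement's English description precedes it below -/
import Mathlib

section
/- For every integer m ≥ 1, every n ≥ 0 and every x > 0, pointwise on the underlying probability space: if θ^{(m)}_{n+1} − θ^{(m)}_n > x, then there exist i ∈ {1,…,N} and j ∈ {0,1} such that Y_{n,2i+j} > x and 𝒴_i(n) > x + 𝒴_N(n−m) (with 𝒴_N(k) = 0 for k < 0). -/
open MeasureTheory ProbabilityTheory Real Filter Set

noncomputable section

/-- One step of the `N`-BRW: each of the `N` particles branches into two, the children jump
according to `jump`, and only the `N` right-most particles are kept; the result is the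
sorted (ascending) vector of the `N` retained positions. -/
def brwStep (N : ℕ) (pos : Fin N → ℝ) (jump : Fin N → Fin 2 → ℝ) : Fin N → ℝ := fun i =>
  (((Finset.univ : Finset (Fin N × Fin 2)).val.map fun p => pos p.1 + jump p.1 p.2).sort
      (· ≤ ·)).getD (N + i) 0

/-- The `N`-BRW started from the sorted configuration `x0`, driven by the jumps `jump`:
`brw N x0 jump n i` is the position `X_{i+1}(n)` of the `(i+1)`-th lowest particle at time `n`. -/
def brw (N : ℕ) (x0 : Fin N → ℝ) (jump : ℕ → Fin N → Fin 2 → ℝ) : ℕ → Fin N → ℝ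
  | 0 => x0
  | n + 1 => brwStep N (brw N x0 jump n) (jump n)

/-- Position `X_N(n)` of the right-most particle of the `N`-BRW started at the origin. -/
def brwMax (N : ℕ) (jump : ℕ → Fin N → Fin 2 → ℝ) (n : ℕ) : ℝ :=
  ⨆ i, brw N (fun _ => 0) jump n i

/-- Position `X_1(n)` of the left-most particle of the `N`-BRW started at the origin. -/
def brwMin (N : ℕ) (jump : ℕ → Fin N → Fin 2 → ℝ) (n : ℕ) : ℝ :=
  ⨅ i, brw N (fun _ => 0) jump n i

/-- The `(N,ℓ)`-discretised stairs process driven by the jumps `Y`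
(with the convention `R(k) = 0` for `k ≤ 0`, realised via truncated subtraction). -/
def dsp (N ℓ : ℕ) (Y : ℕ → Fin N → Fin 2 → ℝ) : ℕ → ℝ
  | 0 => 0
  | n + 1 => max (dsp N ℓ Y n) (dsp N ℓ Y (n - ℓ) + ⨆ p : Fin N × Fin 2, Y n p.1 p.2)

/-- The tail `P(X > x) = 1/h(x)` of the random variable `X` under `P`. -/
def tail {Ω : Type*} [MeasurableSpace Ω] (P : Measure Ω) (X : Ω → ℝ) (x : ℝ) : ℝ :=
  (P {ω | x < X ω}).toReal

/-- Generalized inverse `h⁻¹(y)` of `h(x) = 1 / P(X > x)`. -/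
def hinv {Ω : Type*} [MeasurableSpace Ω] (P : Measure Ω) (X : Ω → ℝ) (y : ℝ) : ℝ :=
  sInf {x : ℝ | 0 ≤ x ∧ tail P X x ≤ y⁻¹}

/-- The scaling sequence `c_N = h⁻¹(2 N log₂ N)`. -/
def cN {Ω : Type*} [MeasurableSpace Ω] (P : Measure Ω) (X : Ω → ℝ) (N : ℕ) : ℝ :=
  hinv P X (2 * N * Real.logb 2 N)

/-- `θ^{(m)}_n = max_{0 ≤ k ≤ n} (𝒴_N(k) − R^{N,m}(k))`. -/
def theta (N m : ℕ) (Y : ℕ → Fin N → Fin 2 → ℝ) (n : ℕ) : ℝ :=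
  (Finset.range (n + 1)).sup' Finset.nonempty_range_add_one fun k => brwMax N Y k - dsp N m Y k

theorem brwStep_mem (N : ℕ) (pos : Fin N → ℝ) (jump : Fin N → Fin 2 → ℝ) (i : Fin N) :
    ∃ (k : Fin N) (j : Fin 2), brwStep N pos jump i = pos k + jump k j := by
  unfold brwStep
  set s := ((Finset.univ : Finset (Fin N × Fin 2)).val.map fun p => pos p.1 + jump p.1 p.2)
    with hs
  have hlen : (s.sort (· ≤ ·)).length = N * 2 := by
    rw [Multiset.length_sort, hs, Multiset.card_map, Finset.card_val, Finset.card_univ,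
      Fintype.card_prod, Fintype.card_fin, Fintype.card_fin]
  have hlt : N + (i : ℕ) < (s.sort (· ≤ ·)).length := by
    rw [hlen]; have := i.isLt; omega
  rw [List.getD_eq_getElem _ _ hlt]
  have hmem := List.getElem_mem hlt
  obtain ⟨p, -, hp⟩ := Multiset.mem_map.1 ((Multiset.mem_sort _).1 hmem)
  exact ⟨p.1, p.2, hp.symm⟩

theorem stmt_5_aux (N : ℕ) (hN : 1 ≤ N) (Y : ℕ → Fin N → Fin 2 → ℝ) (m n : ℕ) (x : ℝ)
    (hx : 0 < x) (hθ : x < theta N m Y (n + 1) - theta N m Y n) :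
    ∃ (i : Fin N) (j : Fin 2),
      x < Y n i j ∧ x + brwMax N Y (n - m) < brw N (fun _ => 0) Y n i := by
  have : Nonempty (Fin N) := ⟨⟨0, hN⟩⟩
  have hle : ∀ k, k ≤ n → brwMax N Y k - dsp N m Y k ≤ theta N m Y n := fun k hk =>
    Finset.le_sup' (fun k => brwMax N Y k - dsp N m Y k)
      (Finset.mem_range.2 (Nat.lt_succ_of_le hk))
  have hbig : theta N m Y n + x < brwMax N Y (n + 1) - dsp N m Y (n + 1) := by
    have h1 : theta N m Y n + x < theta N m Y (n + 1) := by linarith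
    obtain ⟨k, hk, hlt⟩ := (Finset.lt_sup'_iff _).1 h1
    rcases Nat.lt_or_ge n k with h | h
    · have hk' : k = n + 1 := by have := Finset.mem_range.1 hk; omega
      rw [hk'] at hlt; exact hlt
    · have := hle k h
      linarith
  obtain ⟨i0, hi0⟩ := exists_eq_ciSup_of_finite (f := brw N (fun _ => 0) Y (n + 1))
  obtain ⟨i, j, hij⟩ := brwStep_mem N (brw N (fun _ => 0) Y n) (Y n) i0
  have hmax : brwMax N Y (n + 1) = brw N (fun _ => 0) Y n i + Y n i j := by
    rw [← hij]; exact hi0.symm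
  have hi : brw N (fun _ => 0) Y n i ≤ brwMax N Y n :=
    le_ciSup (Set.finite_range (brw N (fun _ => 0) Y n)).bddAbove i
  have hY : Y n i j ≤ ⨆ p : Fin N × Fin 2, Y n p.1 p.2 :=
    le_ciSup (f := fun p : Fin N × Fin 2 => Y n p.1 p.2) (Set.finite_range _).bddAbove (i, j)
  have hd : dsp N m Y (n + 1)
      = max (dsp N m Y n) (dsp N m Y (n - m) + ⨆ p : Fin N × Fin 2, Y n p.1 p.2) := by
    rw [dsp]
  have hd1 : dsp N m Y n ≤ dsp N m Y (n + 1) := hd ▸ le_max_left _ _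
  have hd2 : dsp N m Y (n - m) + (⨆ p : Fin N × Fin 2, Y n p.1 p.2) ≤ dsp N m Y (n + 1) :=
    hd ▸ le_max_right _ _
  have h1 := hle n le_rfl
  have h2 := hle (n - m) (Nat.sub_le _ _)
  exact ⟨i, j, by linarith, by linarith⟩

/-- pointwise on the underlying probability space, for `m ≥ 1`, `n ≥ 0` and
`x > 0`: if `θ^{(m)}_{n+1} − θ^{(m)}_n > x`, then some particle `i` has jump `Y_{n,2i+j} > x`
for some `j ∈ {0,1}` and position `𝒴_i(n) > x + 𝒴_N(n−m)` (with `𝒴_N(k) = 0` for `k < 0`). -/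
theorem stmt_5 {Ω : Type*} [MeasurableSpace Ω] (P : Measure Ω) [IsProbabilityMeasure P]
    (X : Ω → ℝ) (hXmeas : Measurable X) (hXpos : ∀ ω, 0 ≤ X ω)
    (α : ℝ) (hα : 0 < α)
    (hRV : ∀ l : ℝ, 0 < l →
      Tendsto (fun x => tail P X x / tail P X (l * x)) atTop (nhds (l ^ α)))
    (N : ℕ) (hN : 1 ≤ N)
    (ξ : ℕ → Fin N → Fin 2 → Ω → ℝ)
    (hξmeas : ∀ n i j, Measurable (ξ n i j))
    (hξpos : ∀ n i j ω, 0 ≤ ξ n i j ω)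
    (hξdist : ∀ n i j, Measure.map (ξ n i j) P = Measure.map X P)
    (hξindep : iIndepFun
      (fun p : ℕ × Fin N × Fin 2 => ξ p.1 p.2.1 p.2.2) P)
    (m : ℕ) (hm : 1 ≤ m) (n : ℕ) (x : ℝ) (hx : 0 < x) (ω : Ω)
    (hθ : x < theta N m (fun k i j => ξ k i j ω / cN P X N) (n + 1) -
        theta N m (fun k i j => ξ k i j ω / cN P X N) n) :
    ∃ (i : Fin N) (j : Fin 2),
      x < ξ n i j ω / cN P X N ∧
      x + brwMax N (fun k i j => ξ k i j ω / cN P X N) (n - m) <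
        brw N (fun _ => 0) (fun k i j => ξ k i j ω / cN P X N) n i := by
  exact stmt_5_aux N hN (fun k i j => ξ k i j ω / cN P X N) m n x hx hθ

end
end

section
/- For every integer m ≥ 0 and every real x, the expected number of particles of the N-BRW above x at time m satisfies E[ #{ i ∈ {1,…,N} : X_i(m) > x } ] ≤ N · 2^m · P(S_m > x). -/
open MeasureTheory ProbabilityTheory Real Filter Set

noncomputable section

lemma sorted_getD_iff (x : ℝ) (l : List ℝ) (hl : l.Pairwise (· ≤ ·)) (k : ℕ)
    (hk : k < l.length) :
    x < l.getD k 0 ↔ l.length ≤ k + l.countP (fun y => decide (x < y)) := by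
  induction l generalizing k with
  | nil => simp at hk
  | cons a t ih =>
    rw [List.pairwise_cons] at hl
    have hle : t.countP (fun y => decide (x < y)) ≤ t.length := List.countP_le_length
    by_cases hx : x < a
    · have hall : t.countP (fun y => decide (x < y)) = t.length := by
        rw [List.countP_eq_length]
        intro b hb
        simpa using hx.trans_le (hl.1 b hb)
      cases k with
      | zero => simp [hx, hall]
      | succ k =>
        have hk' : k < t.length := by simpa using hk
        have := ih hl.2 k hk'
        simp only [List.getD_cons_succ, this, List.length_cons, List.countP_cons, hall]
        simp [hx]
    · cases k with
      | zero => simp [hx]; omega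
      | succ k =>
        have hk' : k < t.length := by simpa using hk
        have := ih hl.2 k hk'
        simp only [List.getD_cons_succ, this, List.length_cons, List.countP_cons]
        simp [hx]
        omega

lemma lt_brwStep_iff (N : ℕ) (pos : Fin N → ℝ) (jump : Fin N → Fin 2 → ℝ) (i : Fin N) (x : ℝ) :
    x < brwStep N pos jump i ↔
      N ≤ i + ∑ p : Fin N × Fin 2, if x < pos p.1 + jump p.1 p.2 then 1 else 0 := by
  unfold brwStep
  rw [sorted_getD_iff]
  · rw [← Multiset.coe_countP, Multiset.sort_eq, Multiset.length_sort, Multiset.countP_map,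
      ← Finset.card_filter]
    simp only [Multiset.card_map, Finset.card_val, Finset.card_univ, Fintype.card_prod,
      Fintype.card_fin, decide_eq_true_eq]
    rw [← Finset.filter_val, Finset.card_val]
    omega
  · exact Multiset.pairwise_sort _ _
  · rw [Multiset.length_sort]
    simp
    omega

lemma card_brwStep_le (N : ℕ) (pos : Fin N → ℝ) (jump : Fin N → Fin 2 → ℝ) (x : ℝ) :
    (∑ i, if x < brwStep N pos jump i then 1 else 0) ≤
      ∑ p : Fin N × Fin 2, if x < pos p.1 + jump p.1 p.2 then 1 else 0 := by
  simp_rw [lt_brwStep_iff]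
  generalize (∑ p : Fin N × Fin 2, if x < pos p.1 + jump p.1 p.2 then 1 else 0) = c
  rw [← Finset.card_filter]
  calc _ ≤ (Finset.range c).card := by
        apply Finset.card_le_card_of_injOn (fun i : Fin N => N - 1 - (i : ℕ))
        · intro i hi
          have := i.2
          simp at hi ⊢
          omega
        · intro i _ j _ h
          have := i.2
          have := j.2
          simp at h
          ext
          omega
    _ = c := by simp

lemma measurable_brwStep {α : Type*} [MeasurableSpace α] (N : ℕ) (pos : Fin N → α → ℝ)
    (jump : Fin N → Fin 2 → α → ℝ) (hp : ∀ i, Measurable (pos i))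
    (hj : ∀ i j, Measurable (jump i j)) (i : Fin N) :
    Measurable (fun a => brwStep N (fun i => pos i a) (fun i j => jump i j a) i) := by
  apply measurable_of_Ioi
  intro x
  have : (fun a => brwStep N (fun i => pos i a) (fun i j => jump i j a) i) ⁻¹' Ioi x =
      {a | N ≤ i + ∑ p : Fin N × Fin 2, if x < pos p.1 a + jump p.1 p.2 a then 1 else 0} := by
    ext a
    simp only [mem_preimage, mem_Ioi, mem_ofPred_eq, lt_brwStep_iff]
  rw [this]
  apply measurableSet_le measurable_const
  apply Measurable.const_add
  apply Finset.measurable_fun_sum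
  intro p _
  exact Measurable.ite (measurableSet_lt measurable_const ((hp _).add (hj _ _)))
    measurable_const measurable_const

lemma measurable_brw {α : Type*} [MeasurableSpace α] (N : ℕ) (x0 : Fin N → ℝ)
    (jump : ℕ → Fin N → Fin 2 → α → ℝ)
    (hj : ∀ n i j, Measurable (jump n i j)) (n : ℕ) (i : Fin N) :
    Measurable (fun a => brw N x0 (fun n i j => jump n i j a) n i) := by
  induction n generalizing i with
  | zero => exact measurable_const
  | succ n ih =>
    exact measurable_brwStep N (fun i a => brw N x0 (fun n i j => jump n i j a) n i) (jump n)
      ih (hj n) i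

lemma brw_congr (N : ℕ) (x0 : Fin N → ℝ) (J J' : ℕ → Fin N → Fin 2 → ℝ) (m : ℕ)
    (h : ∀ k < m, J k = J' k) : brw N x0 J m = brw N x0 J' m := by
  induction m with
  | zero => rfl
  | succ m ih =>
    simp only [brw]
    rw [ih (fun k hk => h k (by omega)), h m (by omega)]

lemma indep_brw {Ω : Type*} [MeasurableSpace Ω] (P : Measure Ω)
    (N : ℕ) (ξ : ℕ → Fin N → Fin 2 → Ω → ℝ)
    (hξmeas : ∀ n i j, Measurable (ξ n i j))
    (hξindep : iIndepFun
      (fun p : ℕ × Fin N × Fin 2 => ξ p.1 p.2.1 p.2.2) P) (x0 : Fin N → ℝ) (m : ℕ)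
    (i a : Fin N) (b : Fin 2) :
    IndepFun (fun ω => brw N x0 (fun k a b => ξ k a b ω) m i) (ξ m a b) P := by
  classical
  let S : Finset (ℕ × Fin N × Fin 2) := Finset.range m ×ˢ Finset.univ
  let T : Finset (ℕ × Fin N × Fin 2) := {(m, a, b)}
  have hST : Disjoint S T := by simp [S, T]
  have h := hξindep.indepFun_finset S T hST (fun p => hξmeas _ _ _)
  let J : ℕ → Fin N → Fin 2 → (S → ℝ) → ℝ := fun k a b g =>
    if h : (k, a, b) ∈ S then g ⟨_, h⟩ else 0
  have hJ : ∀ k a b, Measurable (J k a b) := by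
    intro k a b
    by_cases h : (k, a, b) ∈ S
    · simp only [J, h, dite_true]
      exact measurable_pi_apply _
    · simp only [J, h, dite_false]
      exact measurable_const
  have h2 := h.comp (measurable_brw N x0 J hJ m i)
    (measurable_pi_apply (⟨(m, a, b), by simp [T]⟩ : T))
  have e : (fun ω => brw N x0 (fun k a b => ξ k a b ω) m i) =
      (fun g => brw N x0 (fun n i j => J n i j g) m i) ∘
        (fun ω (p : S) => ξ p.1.1 p.1.2.1 p.1.2.2 ω) := by
    funext ω
    simp only [Function.comp]
    rw [brw_congr]
    intro k hk
    funext a b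
    have : (k, a, b) ∈ S := by simp [S, hk]
    simp [J, this]
  rw [e]
  exact h2

lemma tail_add {Ω : Type*} [MeasurableSpace Ω] (P : Measure Ω) [IsProbabilityMeasure P]
    (Y Z : Ω → ℝ) (hY : Measurable Y) (hZ : Measurable Z) (h : IndepFun Y Z P) (x : ℝ) :
    P {ω | x < Y ω + Z ω} = ∫⁻ z, P {ω | x - z < Y ω} ∂(P.map Z) := by
  have hs : MeasurableSet {q : ℝ × ℝ | x < q.1 + q.2} :=
    measurableSet_lt measurable_const (measurable_fst.add measurable_snd)
  have h1 := (indepFun_iff_map_prod_eq_prod_map_map hY.aemeasurable hZ.aemeasurable).1 h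
  have : IsProbabilityMeasure (P.map Y) := Measure.isProbabilityMeasure_map hY.aemeasurable
  have : IsProbabilityMeasure (P.map Z) := Measure.isProbabilityMeasure_map hZ.aemeasurable
  calc P {ω | x < Y ω + Z ω}
      = P.map (fun ω => (Y ω, Z ω)) {q : ℝ × ℝ | x < q.1 + q.2} := by
        rw [Measure.map_apply (hY.prodMk hZ) hs]; rfl
    _ = _ := by
        rw [h1, Measure.prod_apply_symm hs]
        congr 1
        funext z
        rw [Measure.map_apply hY (hs.preimage measurable_prodMk_right)]
        congr 1
        ext ω
        simp [sub_lt_iff_lt_add]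

/-- the expected number of particles of the `N`-BRW above `x` at time `m` is at
most `N 2^m P(S_m > x)`, where `(S_m)` is a random walk with i.i.d. increments distributed as
`X` (realised on an auxiliary probability space `(Ω', P')`). -/
theorem stmt_6 {Ω : Type*} [MeasurableSpace Ω] (P : Measure Ω) [IsProbabilityMeasure P]
    (X : Ω → ℝ) (hXmeas : Measurable X) (hXpos : ∀ ω, 0 ≤ X ω)
    (N : ℕ) (hN : 1 ≤ N)
    (ξ : ℕ → Fin N → Fin 2 → Ω → ℝ)
    (hξmeas : ∀ n i j, Measurable (ξ n i j))
    (hξpos : ∀ n i j ω, 0 ≤ ξ n i j ω)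
    (hξdist : ∀ n i j, Measure.map (ξ n i j) P = Measure.map X P)
    (hξindep : iIndepFun
      (fun p : ℕ × Fin N × Fin 2 => ξ p.1 p.2.1 p.2.2) P)
    {Ω' : Type*} [MeasurableSpace Ω'] (P' : Measure Ω') [IsProbabilityMeasure P']
    (η : ℕ → Ω' → ℝ)
    (hηmeas : ∀ k, Measurable (η k))
    (hηdist : ∀ k, Measure.map (η k) P' = Measure.map X P)
    (hηindep : iIndepFun η P')
    (m : ℕ) (x : ℝ) :
    (∫ ω, ((Finset.univ.filter fun i : Fin N =>
        x < brw N (fun _ => 0) (fun k a b => ξ k a b ω) m i).card : ℝ) ∂P) ≤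
      (N : ℝ) * 2 ^ m * (P' {ω' | x < ∑ k ∈ Finset.range m, η k ω'}).toReal := by
  have hB : ∀ m i, Measurable (fun ω => brw N (fun _ => 0) (fun k a b => ξ k a b ω) m i) :=
    fun m i => measurable_brw N _ ξ hξmeas m i
  have hBs : ∀ m i x, MeasurableSet
      {ω | x < brw N (fun _ => 0) (fun k a b => ξ k a b ω) m i} :=
    fun m i x => measurableSet_lt measurable_const (hB m i)
  have key : ∀ (m : ℕ) (x : ℝ),
      ∑ i, P {ω | x < brw N (fun _ => 0) (fun k a b => ξ k a b ω) m i} ≤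
        (N : ENNReal) * 2 ^ m * P' {ω' | x < ∑ k ∈ Finset.range m, η k ω'} := by
    intro m
    induction m with
    | zero =>
      intro x
      by_cases hx : x < 0 <;> simp [brw, hx]
    | succ m ih =>
      intro x
      have hC : ∀ p : Fin N × Fin 2, MeasurableSet {ω |
          x < brw N (fun _ => 0) (fun k a b => ξ k a b ω) m p.1 + ξ m p.1 p.2 ω} :=
        fun p => measurableSet_lt measurable_const ((hB m p.1).add (hξmeas _ _ _))
      have step1 : ∑ i, P {ω | x < brw N (fun _ => 0) (fun k a b => ξ k a b ω) (m + 1) i} ≤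
          ∑ p : Fin N × Fin 2, P {ω |
            x < brw N (fun _ => 0) (fun k a b => ξ k a b ω) m p.1 + ξ m p.1 p.2 ω} := by
        simp_rw [← lintegral_indicator_one (hBs _ _ _), ← lintegral_indicator_one (hC _)]
        rw [← lintegral_finsetSum _ (fun i _ => measurable_one.indicator (hBs _ _ _)),
          ← lintegral_finsetSum _ (fun p _ => measurable_one.indicator (hC _))]
        apply lintegral_mono
        intro ω
        have := card_brwStep_le N (brw N (fun _ => 0) (fun k a b => ξ k a b ω) m)
          (fun a b => ξ m a b ω) x
        have h2 : ((∑ i, if x < brwStep N (brw N (fun _ => 0) (fun k a b => ξ k a b ω) m)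
            (fun a b => ξ m a b ω) i then 1 else 0 : ℕ) : ENNReal) ≤
            ((∑ p : Fin N × Fin 2, if x < brw N (fun _ => 0) (fun k a b => ξ k a b ω) m p.1
              + ξ m p.1 p.2 ω then 1 else 0 : ℕ) : ENNReal) := by exact_mod_cast this
        push_cast at h2
        simpa only [Set.indicator_apply, mem_ofPred_eq, Pi.one_apply, brw] using h2
      refine step1.trans ?_
      have hη := tail_add P' (∑ k ∈ Finset.range m, η k) (η m)
        (by
          have := Finset.measurable_sum (Finset.range m) fun k _ => hηmeas k
          convert this using 1
          ext ω
          simp) (hηmeas m)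
        (hηindep.indepFun_sum_range_succ hηmeas m) x
      simp only [Finset.sum_apply, hηdist] at hη
      simp_rw [Finset.sum_range_succ, hη]
      have hmono : ∀ f : ℝ → ENNReal, Antitone f → Measurable fun z => f (x - z) := by
        intro f hf
        apply Monotone.measurable
        intro a b hab
        exact hf (by linarith)
      have e : ∀ p : Fin N × Fin 2, P {ω |
          x < brw N (fun _ => 0) (fun k a b => ξ k a b ω) m p.1 + ξ m p.1 p.2 ω} =
          ∫⁻ z, P {ω | x - z < brw N (fun _ => 0) (fun k a b => ξ k a b ω) m p.1}
            ∂(P.map X) := by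
        intro p
        rw [← hξdist m p.1 p.2]
        exact tail_add P _ _ (hB m p.1) (hξmeas _ _ _)
          (indep_brw P N ξ hξmeas hξindep _ m p.1 p.1 p.2) x
      simp_rw [e, Fintype.sum_prod_type]
      simp only [Finset.sum_const, Finset.card_univ, Fintype.card_fin, nsmul_eq_mul]
      rw [← Finset.mul_sum, ← lintegral_finsetSum]
      · calc _ ≤ ((2 : ℕ) : ENNReal) * ∫⁻ z, (N : ENNReal) * 2 ^ m *
              P' {ω' | x - z < ∑ k ∈ Finset.range m, η k ω'} ∂(P.map X) := by
              gcongr with z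
              exact ih (x - z)
          _ = _ := by
              rw [lintegral_const_mul]
              · push_cast
                ring
              · exact hmono (fun y => P' {ω' | y < ∑ k ∈ Finset.range m, η k ω'})
                  (fun a b hab => measure_mono fun ω h => lt_of_le_of_lt hab h)
      · intro i _
        exact hmono (fun y => P {ω | y < brw N (fun _ => 0) (fun k a b => ξ k a b ω) m i})
          (fun a b hab => measure_mono fun ω h => lt_of_le_of_lt hab h)
  have hk := ENNReal.toReal_mono (by finiteness) (key m x)
  rw [ENNReal.toReal_sum (by intros; finiteness)] at hk
  simp only [ENNReal.toReal_mul, ENNReal.toReal_natCast, ENNReal.toReal_pow,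
    ENNReal.toReal_ofNat] at hk
  refine le_trans (le_of_eq ?_) hk
  have e : ∀ ω, ((Finset.univ.filter fun i : Fin N =>
        x < brw N (fun _ => 0) (fun k a b => ξ k a b ω) m i).card : ℝ) =
      ∑ i, Set.indicator {ω | x < brw N (fun _ => 0) (fun k a b => ξ k a b ω) m i}
        (1 : Ω → ℝ) ω := by
    intro ω
    rw [Finset.card_filter]
    push_cast
    simp only [Set.indicator_apply, mem_ofPred_eq, Pi.one_apply]
  simp_rw [e]
  rw [integral_finsetSum]
  · simp_rw [integral_indicator_one (hBs _ _ _)]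
    rfl
  · intro i _
    exact (integrable_const (1 : ℝ)).indicator (hBs _ _ _)

end
end
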